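/- Let W_n = n·2^n − 1 denote the n-th Woodall number and let S denote the set of positive integers all of whose prime factors lie in {2, 3, 5, 7}. Then the only solution of the equation W_n = 1! + s with n a positive integer, n < 10^66, and s ∈ S is n = 2, s = 6, i.e., W_2 = 1! + 6. -/

import Mathlib

/-- If `2 ^ L ≡ 1` modulo `p`, then `2 ^ n` modulo `p ^ (j + 1)` depends only on `n` modulo
`L * p ^ j`. -/
theorem two_pow_modEq_two_pow {p L j a b : ℕ} (hL : 2 ^ L ≡ 1 [MOD p])
    (h : a ≡ b [MOD L * p ^ j]) : 2 ^ a ≡ 2 ^ b [MOD p ^ (j + 1)] := by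
  have hperiod : 2 ^ (L * p ^ j) ≡ 1 [MOD p ^ (j + 1)] := by
    have hdvd : (p : ℤ) ∣ 2 ^ L - 1 := by
      have := hL.symm.dvd
      push_cast at this
      exact this
    have hlift := dvd_sub_pow_of_dvd_sub hdvd j
    rw [one_pow, ← pow_mul] at hlift
    refine ((Nat.modEq_iff_dvd).2 ?_).symm
    push_cast
    exact hlift
  wlog hab : a ≤ b generalizing a b
  · exact (this h.symm (le_of_not_ge hab)).symm
  obtain ⟨c, hc⟩ := (Nat.modEq_iff_dvd' hab).1 h
  obtain rfl : b = a + L * p ^ j * c := by omega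
  have := ((hperiod.pow c).mul_left (2 ^ a)).symm
  rwa [← pow_mul, one_pow, mul_one, ← pow_add] at this

/-- On a residue class modulo `L`, the map `n ↦ n * 2 ^ n` is injective `p`-adically. -/
theorem modEq_of_mul_two_pow_modEq {p L a b : ℕ} (hp : Nat.Coprime p 2) (hpL : Nat.Coprime L p)
    (hL : 2 ^ L ≡ 1 [MOD p]) (hab : a ≡ b [MOD L]) {k : ℕ}
    (h : a * 2 ^ a ≡ b * 2 ^ b [MOD p ^ k]) : a ≡ b [MOD L * p ^ k] := by
  induction k with
  | zero => simpa using hab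
  | succ j ih =>
    have hj := ih (h.of_dvd (pow_dvd_pow p j.le_succ))
    have hpow := two_pow_modEq_two_pow hL hj
    have hmul : a * 2 ^ a ≡ b * 2 ^ a [MOD p ^ (j + 1)] := h.trans (hpow.symm.mul_left b)
    have hcop : Nat.gcd (p ^ (j + 1)) (2 ^ a) = 1 := hp.pow (j + 1) a
    exact (Nat.modEq_and_modEq_iff_modEq_mul (hpL.pow_right (j + 1))).1
      ⟨hab, Nat.ModEq.cancel_right_of_coprime hcop hmul⟩

/-- `2 ^ n % m` by repeated squaring, reading the lowest `fuel` binary digits of `n`. -/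
def twoPowMod (m : ℕ) : ℕ → ℕ → ℕ
  | 0, _ => 1 % m
  | fuel + 1, n => twoPowMod m fuel (n / 2) ^ 2 * 2 ^ (n % 2) % m

theorem twoPowMod_modEq (m : ℕ) {fuel n : ℕ} (h : n < 2 ^ fuel) :
    twoPowMod m fuel n ≡ 2 ^ n [MOD m] := by
  induction fuel generalizing n with
  | zero =>
    obtain rfl : n = 0 := by simpa using h
    exact Nat.mod_modEq 1 m
  | succ fuel ih =>
    have hhalf : n / 2 < 2 ^ fuel := by
      rw [pow_succ] at h
      omega
    have hstep := ((ih hhalf).pow 2).mul_right (2 ^ (n % 2))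
    rw [← pow_mul, ← pow_add, Nat.div_add_mod' n 2] at hstep
    exact (Nat.mod_modEq _ m).trans hstep

/-- A solution `n` of `n * 2 ^ n ≡ 2` modulo `p ^ k` below the period `L * p ^ k` is determined by
its class modulo `L`. -/
theorem eq_of_mul_two_pow_modEq_two {p L k n r : ℕ} (hp : Nat.Coprime p 2)
    (hpL : Nat.Coprime L p) (hL : 2 ^ L ≡ 1 [MOD p]) (hn : n * 2 ^ n ≡ 2 [MOD p ^ k])
    (hr : r * twoPowMod (p ^ k) 256 r % p ^ k = 2 % p ^ k) (hr256 : r < 2 ^ 256)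
    (hnr : n ≡ r [MOD L])
    (hnlt : n < L * p ^ k) (hrlt : r < L * p ^ k) : n = r := by
  have hr' : r * 2 ^ r ≡ 2 [MOD p ^ k] :=
    ((twoPowMod_modEq (p ^ k) hr256).mul_left r).symm.trans hr
  exact (modEq_of_mul_two_pow_modEq hp hpL hL hnr (hn.trans hr'.symm)).eq_of_lt_of_lt hnlt hrlt

theorem not_mul_two_pow_modEq_two_three {n : ℕ} (h1 : 1 < n) (hN : n < 10 ^ 66) :
    ¬ n * 2 ^ n ≡ 2 [MOD 3 ^ 139] := by
  intro h
  have key (r : ℕ) := eq_of_mul_two_pow_modEq_two (p := 3) (L := 2) (r := r)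
    (by decide) (by decide) (by decide) h
  have hcases : n % 2 = 0 ∨ n % 2 = 1 := by omega
  rcases hcases with hc | hc
  · have := key 1780364649578693192282169238786106439697282677604945689117235624118
      (by decide +kernel) (by norm_num) hc (by omega) (by norm_num)
    omega
  · have := key 1 (by decide +kernel) (by norm_num) hc (by omega) (by norm_num)
    omega

theorem not_mul_two_pow_modEq_two_five {n : ℕ} (h1 : 1 < n) (hN : n < 10 ^ 66) :
    ¬ n * 2 ^ n ≡ 2 [MOD 5 ^ 95] := by
  intro h
  have key (r : ℕ) := eq_of_mul_two_pow_modEq_two (p := 5) (L := 4) (r := r)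
    (by decide) (by decide) (by decide) h
  have hcases : n % 4 = 0 ∨ n % 4 = 1 ∨ n % 4 = 2 ∨ n % 4 = 3 := by omega
  rcases hcases with hc | hc | hc | hc
  · have := key 2961908171939841220483362485605263974704194579116214545104494723112
      (by decide +kernel) (by norm_num) hc (by omega) (by norm_num)
    omega
  · have := key 1 (by decide +kernel) (by norm_num) hc (by omega) (by norm_num)
    omega
  · have := key 4871073342569149304405035395950661088564509290602565719192125760958
      (by decide +kernel) (by norm_num) hc (by omega) (by norm_num)
    omega
  · have := key 7474232138673028739135464638925082581728469398899450458402856603179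
      (by decide +kernel) (by norm_num) hc (by omega) (by norm_num)
    omega

theorem not_mul_two_pow_modEq_two_seven {n : ℕ} (h1 : 1 < n) (hN : n < 10 ^ 66) :
    ¬ n * 2 ^ n ≡ 2 [MOD 7 ^ 78] := by
  intro h
  have key (r : ℕ) := eq_of_mul_two_pow_modEq_two (p := 7) (L := 3) (r := r)
    (by decide) (by decide) (by decide) h
  have hcases : n % 3 = 0 ∨ n % 3 = 1 ∨ n % 3 = 2 := by omega
  rcases hcases with hc | hc | hc
  · have := key 1688984004690996351255035093470237944911766261254543325873560910897
      (by decide +kernel) (by norm_num) hc (by omega) (by norm_num)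
    omega
  · have := key 1 (by decide +kernel) (by norm_num) hc (by omega) (by norm_num)
    omega
  · have := key 1943728540872828544710474790980551391632278369901869348214088201206
      (by decide +kernel) (by norm_num) hc (by omega) (by norm_num)
    omega

theorem pow_dvd_pow_of_not_pow_dvd {p k e s : ℕ} (hk : p ^ k ∣ s) (he : ¬ p ^ (e + 1) ∣ s) :
    p ^ k ∣ p ^ e := by
  refine pow_dvd_pow p ?_
  by_contra! hlt
  exact he ((pow_dvd_pow p hlt).trans hk)

/-- For `1 < n < 10 ^ 66`, a `7`-smooth value of `n * 2 ^ n - 2` divides an explicit bound. -/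
theorem dvd_of_mul_two_pow_eq_add_two {n s : ℕ} (h1 : 1 < n) (hN : n < 10 ^ 66)
    (hsP : ∀ p, p.Prime → p ∣ s → p ∈ ({2, 3, 5, 7} : Finset ℕ)) (h : n * 2 ^ n = s + 2) :
    s ∣ 2 ^ 1 * 3 ^ 138 * 5 ^ 94 * 7 ^ 77 := by
  have hmod {m : ℕ} (hm : m ∣ s) : n * 2 ^ n ≡ 2 [MOD m] := by
    rw [h]
    simpa using ((Nat.modEq_zero_iff_dvd).2 hm).add_right 2
  have hfour : ¬ 2 ^ 2 ∣ s := by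
    intro hdvd
    have : 2 ^ 2 ∣ s + 2 := h ▸ (pow_dvd_pow 2 h1).mul_left n
    omega
  rw [Nat.dvd_iff_prime_pow_dvd_dvd]
  intro p k hp hk
  rcases Nat.eq_zero_or_pos k with rfl | hkpos
  · simp
  have hmem := hsP p hp ((dvd_pow_self p hkpos.ne').trans hk)
  simp only [Finset.mem_insert, Finset.mem_singleton] at hmem
  rcases hmem with rfl | rfl | rfl | rfl
  · exact (pow_dvd_pow_of_not_pow_dvd hk hfour).trans
      (((dvd_mul_right _ _).mul_right _).mul_right _)
  · exact (pow_dvd_pow_of_not_pow_dvd hk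
      fun hd ↦ not_mul_two_pow_modEq_two_three h1 hN (hmod hd)).trans
      (((dvd_mul_left _ _).mul_right _).mul_right _)
  · exact (pow_dvd_pow_of_not_pow_dvd hk
      fun hd ↦ not_mul_two_pow_modEq_two_five h1 hN (hmod hd)).trans
      ((dvd_mul_left _ _).mul_right _)
  · exact (pow_dvd_pow_of_not_pow_dvd hk
      fun hd ↦ not_mul_two_pow_modEq_two_seven h1 hN (hmod hd)).trans (dvd_mul_left _ _)

/-- Remark: the only solution of `W_n = 1! + s` with `W_n = n·2^n - 1` the `n`-th Woodall
number, `n` a positive integer with `n < 10^66`, and `s` a positive integer whose prime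
factors lie in `{2, 3, 5, 7}`, is `n = 2`, `s = 6` (i.e. `W_2 = 1! + 6`). -/
theorem woodall_eq_one_factorial_add_S_unit
    (n s : ℕ) (hn : 0 < n) (hN : n < 10 ^ 66) (hs : 0 < s)
    (hsP : ∀ p, p.Prime → p ∣ s → p ∈ ({2, 3, 5, 7} : Finset ℕ)) :
    n * 2 ^ n - 1 = Nat.factorial 1 + s ↔ n = 2 ∧ s = 6 := by
  constructor
  · intro h
    rw [Nat.factorial_one] at h
    have heq : n * 2 ^ n = s + 2 := by omega
    have h1 : 1 < n := by
      by_contra! hle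
      obtain rfl : n = 1 := by omega
      omega
    have hdvd := dvd_of_mul_two_pow_eq_add_two h1 hN hsP heq
    have hbound : n < 700 := by
      by_contra! hge
      have hle := Nat.le_of_dvd (by positivity) hdvd
      have hpow : 1 * 2 ^ 700 ≤ n * 2 ^ n :=
        Nat.mul_le_mul hn (Nat.pow_le_pow_right two_pos hge)
      rw [heq] at hpow
      have hlt : 2 ^ 1 * 3 ^ 138 * 5 ^ 94 * 7 ^ 77 + 2 < 1 * 2 ^ 700 := by decide +kernel
      exact absurd (hpow.trans (Nat.add_le_add_right hle 2)) (not_le.2 hlt)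
    have hsmall : ∀ m < 700, 1 < m →
        2 ^ 1 * 3 ^ 138 * 5 ^ 94 * 7 ^ 77 % (m * 2 ^ m - 2) = 0 → m = 2 := by
      decide +kernel
    obtain rfl : s = n * 2 ^ n - 2 := by omega
    obtain rfl := hsmall n hbound h1 (Nat.mod_eq_zero_of_dvd hdvd)
    simp
  · rintro ⟨rfl, rfl⟩
    rfl
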